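/- Let d ≥ 1, p ≥ 1 and let c_{kℓ} : ℝ^d → ℝ (1 ≤ k,ℓ ≤ p) satisfy: (i) |c_{kℓ}(x)| ≤ A/(1 + |x|^{d+τ}) for all x, with fixed A < ∞, τ > 0; (ii) c_{kℓ}(x) = ∫_{ℝ^d} ĉ_{kℓ}(f) e^{i f·x} df for all x; (iii) λ₁(Ĉ(f)) > 0 for all f ∈ ℝ^d, where Ĉ(f) = {ĉ_{kℓ}(f)}; (iv) there exists Δ > 0 with |x^{(k)}_i − x^{(k)}_j| ≥ Δ for all k and all i ≠ j. For n₁,…,n_p ∈ ℕ⁺ let Σ be the N × N covariance matrix (N = n₁+⋯+n_p) with entry at row N_{k−1}+i and column N_{ℓ−1}+j equal to c_{kℓ}(x^{(k)}_i − x^{(ℓ)}_j). Then for any family of N × N real symmetric positive semidefinite matrices A' with all diagonal entries equal to 1 (one matrix for each choice of n₁,…,n_p), the tapered covariance matrices Σ ∘ A' satisfy inf over all n₁,…,n_p ∈ ℕ⁺ of λ₁(Σ ∘ A') > 0, where ∘ denotes the Schur (entrywise) product. -/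

import Mathlib

open MeasureTheory Matrix Complex
open scoped BigOperators Real

open scoped ComplexOrder MatrixOrder FourierTransform SchwartzMap InnerProductSpace

/-!
Measure frequencies in cycles, so that the covariance function is `𝓕⁻ H` for the spectral density
`H`. Pick a test function `φ ≠ 0` supported in a ball of radius `Δ / 2`. The weight
`h f = (R² - ‖f‖²) ‖𝓕 φ f‖²` is nonpositive off a ball and has positive integral for large `R`,
while `𝓕⁻ h` vanishes outside the ball of radius `Δ`, being the cross-correlation of `φ` with
`R² φ + (2π)⁻² ∇²φ`, which is supported in the support of `φ`.

On the ball where `h` may be positive, the continuous positive definite `H` is bounded below by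
compactness, hence `δ h • 1 ≤ H` everywhere for a small `δ > 0`. Integrating this inequality against
the phases `e^{2πi f·x}` compares two covariance matrices. The one with density `δ h • 1` is exactly
`δ (∫ h) • 1`, as distinct sites of the same component are `Δ` apart. So `Σ ≥ δ (∫ h) • 1` for any
number of sites, and the Schur product theorem carries this bound over to the tapered matrix.
-/

section LoewnerOrder

variable {𝕜 n κ E Ω : Type*} [RCLike 𝕜]

lemma posSemidef_map_ofReal [Finite n] {B : Matrix n n ℝ} (hB : B.PosSemidef) :
    (B.map ((↑) : ℝ → 𝕜)).PosSemidef := by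
  classical
  have := Fintype.ofFinite n
  obtain ⟨C, rfl⟩ := CStarAlgebra.nonneg_iff_eq_star_mul_self.mp hB.nonneg
  have hmap : (star C * C).map ((↑) : ℝ → 𝕜) = (C.map (↑))ᴴ * C.map ((↑) : ℝ → 𝕜) := by
    ext a b
    simp [mul_apply, star_apply]
  exact hmap ▸ posSemidef_conjTranspose_mul_self _

lemma mul_sum_sq_le_of_smul_one_le_map_ofReal [Fintype n] [DecidableEq n] {M : Matrix n n ℝ}
    {m : ℝ} (hM : m • 1 ≤ M.map ((↑) : ℝ → 𝕜)) (v : n → ℝ) :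
    m * ∑ a, v a ^ 2 ≤ ∑ a, ∑ b, v a * M a b * v b := by
  have h := (le_iff.mp hM).dotProduct_mulVec_nonneg (fun a ↦ (v a : 𝕜))
  rw [sub_mulVec, dotProduct_sub, sub_nonneg, smul_mulVec, one_mulVec] at h
  have hstar (a : n) : star (fun a ↦ (v a : 𝕜)) a = v a := RCLike.conj_ofReal _
  simp only [dotProduct, mulVec, Finset.mul_sum, map_apply, Pi.smul_apply, hstar,
    RCLike.real_smul_eq_coe_mul, ← mul_assoc] at h ⊢
  norm_cast at h
  simpa only [sq, mul_assoc, mul_left_comm m] using h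

lemma smul_diagonal_diag_le_hadamard [DecidableEq n] {S B : Matrix n n 𝕜} {m : ℝ}
    (hS : m • 1 ≤ S) (hB : B.PosSemidef) : m • diagonal B.diag ≤ S ⊙ B := by
  have h := (le_iff.mp hS).hadamard hB
  have hsub : (S - m • 1) ⊙ B = S ⊙ B - m • diagonal B.diag := by
    rw [← one_hadamard, ← smul_hadamard]
    ext a b
    simp [sub_mul]
  exact le_iff.mpr (hsub ▸ h)

lemma posSemidef_integral [MeasurableSpace Ω] {μ : Measure Ω} {M : Ω → Matrix n n 𝕜}
    (hint : ∀ a b, Integrable (fun ω ↦ M ω a b) μ) (hM : ∀ ω, (M ω).PosSemidef) :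
    (of fun a b ↦ ∫ ω, M ω a b ∂μ).PosSemidef := by
  refine ⟨?_, fun x ↦ ?_⟩
  · ext a b
    simp only [conjTranspose_apply, of_apply, RCLike.star_def, ← integral_conj]
    exact integral_congr_ae (.of_forall fun ω ↦ (hM ω).isHermitian.apply a b)
  · have hform : (x.sum fun a xa ↦ x.sum fun b xb ↦ star xa * (∫ ω, M ω a b ∂μ) * xb) =
        ∫ ω, x.sum fun a xa ↦ x.sum fun b xb ↦ star xa * M ω a b * xb ∂μ := by
      have hterm a b : Integrable (fun ω ↦ star (x a) * M ω a b * x b) μ :=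
        ((hint a b).const_mul _).mul_const _
      simp only [Finsupp.sum]
      rw [integral_finsetSum _ fun a _ ↦ integrable_finsetSum _ fun b _ ↦ hterm a b]
      refine Finset.sum_congr rfl fun a _ ↦ ?_
      rw [integral_finsetSum _ fun b _ ↦ hterm a b]
      simp only [integral_mul_const, integral_const_mul]
    simp only [of_apply]
    rw [hform]
    exact integral_nonneg fun ω ↦ (hM ω).2 x

variable [Finite κ] [DecidableEq κ]

lemma exists_pos_smul_one_le_of_isCompact [TopologicalSpace E] {H : E → Matrix κ κ 𝕜} {K : Set E}
    (hK : IsCompact K) (hH : Continuous H) (hpos : ∀ f ∈ K, (H f).PosDef) :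
    ∃ m : ℝ, 0 < m ∧ ∀ f ∈ K, m • 1 ≤ H f := by
  have := Fintype.ofFinite κ
  let q (y : E × EuclideanSpace 𝕜 κ) : ℝ :=
    RCLike.re (star y.2.ofLp ⬝ᵥ (H y.1 *ᵥ y.2.ofLp))
  have hq_cont : Continuous q := by
    have hofLp : Continuous fun y : E × EuclideanSpace 𝕜 κ ↦ y.2.ofLp := by fun_prop
    exact RCLike.continuous_re.comp
      (hofLp.star.dotProduct ((hH.comp continuous_fst).matrix_mulVec hofLp))
  have hq_pos : ∀ y ∈ K ×ˢ Metric.sphere (0 : EuclideanSpace 𝕜 κ) 1, 0 < q y := by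
    rintro ⟨f, v⟩ ⟨hf, hv⟩
    refine (hpos f hf).re_dotProduct_pos fun h ↦ ?_
    have hv0 : v = 0 := (WithLp.ofLp_eq_zero 2).mp h
    simp [hv0] at hv
  obtain ⟨m, hm, hmin⟩ :=
    (hK.prod (isCompact_sphere 0 1)).exists_forall_le' hq_cont.continuousOn hq_pos
  refine ⟨m, hm, fun f hf ↦ ?_⟩
  have hherm := (hpos f hf).isHermitian
  rw [← Algebra.algebraMap_eq_smul_one, algebraMap_le_iff_le_spectrum hherm.isSelfAdjoint,
    hherm.spectrum_real_eq_range_eigenvalues]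
  rintro _ ⟨i, rfl⟩
  rw [hherm.eigenvalues_eq]
  exact hmin (f, hherm.eigenvectorBasis i) ⟨hf, by simp⟩

lemma exists_pos_forall_smul_one_le [TopologicalSpace E] {H : E → Matrix κ κ 𝕜} {h : E → ℝ}
    {K : Set E} (hK : IsCompact K) (hH : Continuous H) (hpos : ∀ f, (H f).PosDef)
    (hh : ContinuousOn h K) (hneg : ∀ f ∉ K, h f ≤ 0) :
    ∃ δ : ℝ, 0 < δ ∧ ∀ f, (δ * h f) • 1 ≤ H f := by
  have := Fintype.ofFinite κ
  obtain ⟨m, hm, hmH⟩ := exists_pos_smul_one_le_of_isCompact hK hH fun f _ ↦ hpos f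
  obtain ⟨C, hC⟩ := hK.bddAbove_image hh
  have hone {s t : ℝ} (hst : s ≤ t) : s • (1 : Matrix κ κ 𝕜) ≤ t • 1 :=
    smul_le_smul_of_nonneg_right hst PosSemidef.one.nonneg
  refine ⟨m / max C 1, by positivity, fun f ↦ ?_⟩
  by_cases hf : f ∈ K
  · have hle : m / max C 1 * h f ≤ m := by
      rw [div_mul_eq_mul_div, div_le_iff₀ (by positivity)]
      gcongr
      exact (hC ⟨f, hf, rfl⟩).trans (le_max_left _ _)
    exact (hone hle).trans (hmH f hf)
  · have hle : m / max C 1 * h f ≤ 0 :=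
      mul_nonpos_of_nonneg_of_nonpos (by positivity) (hneg f hf)
    exact (hone hle).trans <| (zero_smul ℝ _).trans_le (hpos f).posSemidef.nonneg

end LoewnerOrder

section BandLimited

variable {V : Type*} [NormedAddCommGroup V] [InnerProductSpace ℝ V] [FiniteDimensional ℝ V]

lemma tsupport_laplacian_subset {F : Type*} [NormedAddCommGroup F] [NormedSpace ℝ F]
    (φ : 𝓢(V, F)) : tsupport (Laplacian.laplacian φ) ⊆ tsupport φ := by
  refine closure_minimal (fun x hx ↦ ?_) (isClosed_tsupport _)
  contrapose! hx
  rw [Function.notMem_support, SchwartzMap.laplacian_eq_sum (stdOrthonormalBasis ℝ V),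
    _root_.sum_apply]
  exact Finset.sum_eq_zero fun i _ ↦ image_eq_zero_of_notMem_tsupport fun h ↦
    hx (SchwartzMap.tsupport_lineDerivOp_subset _ _
      (SchwartzMap.tsupport_lineDerivOp_subset _ _ h))

lemma exists_schwartzMap_ne_zero_tsupport_subset_ball {ρ : ℝ} (hρ : 0 < ρ) :
    ∃ φ : 𝓢(V, ℂ), φ ≠ 0 ∧ tsupport φ ⊆ Metric.ball 0 ρ := by
  let b : ContDiffBump (0 : V) := ⟨ρ / 4, ρ / 2, by positivity, by linarith⟩
  have hb : tsupport (fun x ↦ (b x : ℂ)) ⊆ Metric.ball 0 ρ := by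
    refine (closure_mono (Function.support_comp_subset ofReal_zero b)).trans ?_
    rw [← tsupport, b.tsupport_eq]
    exact Metric.closedBall_subset_ball (half_lt_self hρ)
  have hcompact : HasCompactSupport fun x ↦ (b x : ℂ) :=
    b.hasCompactSupport.comp_left ofReal_zero
  refine ⟨hcompact.toSchwartzMap (ofRealCLM.contDiff.comp b.contDiff), fun h ↦ ?_, hb⟩
  have hb0 : (b 0 : ℂ) = 0 := DFunLike.congr_fun h 0
  simp [b.one_of_mem_closedBall (Metric.mem_closedBall_self b.rIn_pos.le)] at hb0

variable [MeasurableSpace V] [BorelSpace V]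

lemma fourier_laplacian_apply {F : Type*} [NormedAddCommGroup F] [NormedSpace ℂ F]
    [CompleteSpace F] (φ : 𝓢(V, F)) (f : V) :
    𝓕 (Laplacian.laplacian φ) f = (-(2 * π) ^ 2 * ‖f‖ ^ 2) • 𝓕 φ f := by
  rw [SchwartzMap.laplacian_eq_fourierMultiplierCLM, SchwartzMap.fourierMultiplierCLM_apply,
    FourierTransform.fourier_smul, FourierTransform.fourier_fourierInv_eq]
  simp [SchwartzMap.smulLeftCLM_apply_apply (Function.hasTemperateGrowth_norm_sq V)]
  module

section CrossCorrelation

variable {F : Type*} [NormedAddCommGroup F] [InnerProductSpace ℂ F] [CompleteSpace F]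

lemma fourierInv_inner_fourier_fourier (φ ψ : 𝓢(V, F)) (x : V) :
    𝓕⁻ (fun f ↦ ⟪𝓕 φ f, 𝓕 ψ f⟫_ℂ) x = ∫ y, ⟪φ y, ψ (y + x)⟫_ℂ := by
  have hshift (f : V) : 𝓕 (ψ.compSubConstCLM ℂ (-x)) f = 𝐞 ⟪f, x⟫_ℝ • 𝓕 ψ f := by
    rw [SchwartzMap.fourier_coe, SchwartzMap.fourier_coe, real_inner_comm]
    have hcomp : ⇑(ψ.compSubConstCLM ℂ (-x)) = ⇑ψ ∘ fun v ↦ v + x := by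
      ext v
      simp
    rw [hcomp]
    exact congrFun (VectorFourier.fourierIntegral_comp_add_right 𝐞 volume (innerₗ V) ψ x) f
  rw [Real.fourierInv_eq]
  calc ∫ f, 𝐞 ⟪f, x⟫_ℝ • ⟪𝓕 φ f, 𝓕 ψ f⟫_ℂ
      = ∫ f, ⟪𝓕 φ f, 𝓕 (ψ.compSubConstCLM ℂ (-x)) f⟫_ℂ := by
        simp_rw [hshift, Circle.smul_def, inner_smul_right, smul_eq_mul]
    _ = ∫ y, ⟪φ y, ψ (y + x)⟫_ℂ := by
        rw [SchwartzMap.integral_inner_fourier_fourier]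
        simp

lemma fourierInv_inner_fourier_fourier_eq_zero {φ ψ : 𝓢(V, F)} {r : ℝ}
    (hφ : tsupport φ ⊆ Metric.ball 0 (r / 2)) (hψ : tsupport ψ ⊆ Metric.ball 0 (r / 2))
    {x : V} (hx : r ≤ ‖x‖) : 𝓕⁻ (fun f ↦ ⟪𝓕 φ f, 𝓕 ψ f⟫_ℂ) x = 0 := by
  rw [fourierInv_inner_fourier_fourier]
  refine integral_eq_zero_of_ae (.of_forall fun y ↦ ?_)
  by_cases hy : y ∈ tsupport φ
  · have hyx : y + x ∉ tsupport ψ := fun h ↦ by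
      have h₁ := mem_ball_zero_iff.mp (hφ hy)
      have h₂ := mem_ball_zero_iff.mp (hψ h)
      have h₃ := norm_sub_le (y + x) y
      rw [add_sub_cancel_left] at h₃
      linarith
    simp [image_eq_zero_of_notMem_tsupport hyx]
  · simp [image_eq_zero_of_notMem_tsupport hy]

end CrossCorrelation

lemma integral_norm_sq_fourier_pos {φ : 𝓢(V, ℂ)} (hφ : φ ≠ 0) : 0 < ∫ f, ‖𝓕 φ f‖ ^ 2 := by
  obtain ⟨x, hx⟩ := DFunLike.ne_iff.mp hφ
  rw [SchwartzMap.integral_norm_sq_fourier]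
  exact integral_pos_of_integrable_nonneg_nonzero (φ.continuous.norm.pow 2)
    ((φ.memLp 2).integrable_norm_pow two_ne_zero) (fun _ ↦ by positivity)
    (pow_ne_zero 2 (norm_ne_zero_iff.mpr hx))

lemma exists_fourier_eq_sq_sub_norm_sq_mul (φ : 𝓢(V, ℂ)) (R : ℝ) :
    ∃ ψ : 𝓢(V, ℂ), tsupport ψ ⊆ tsupport φ ∧
      ∀ f, 𝓕 ψ f = (R ^ 2 - ‖f‖ ^ 2 : ℝ) * 𝓕 φ f := by
  refine ⟨(R ^ 2 : ℂ) • φ + ((2 * π) ^ 2 : ℂ)⁻¹ • Laplacian.laplacian φ, ?_, fun f ↦ ?_⟩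
  · refine (tsupport_add _ _).trans (Set.union_subset ?_ ?_)
    · exact tsupport_smul_subset_right (fun _ ↦ (R ^ 2 : ℂ)) φ
    · exact (tsupport_smul_subset_right (fun _ ↦ ((2 * π) ^ 2 : ℂ)⁻¹) _).trans
        (tsupport_laplacian_subset φ)
  · have hπ : (π : ℂ) ≠ 0 := ofReal_ne_zero.mpr Real.pi_ne_zero
    rw [FourierTransform.fourier_add, FourierTransform.fourier_smul,
      FourierTransform.fourier_smul, _root_.add_apply, _root_.smul_apply,
      _root_.smul_apply, fourier_laplacian_apply]
    simp only [smul_eq_mul, real_smul]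
    push_cast
    field_simp
    ring

lemma exists_weight_fourierInv_eq_zero {r : ℝ} (hr : 0 < r) :
    ∃ h : V → ℝ, Continuous h ∧ Integrable h ∧ 0 < ∫ f, h f ∧
      (∃ R, ∀ f ∉ Metric.closedBall 0 R, h f ≤ 0) ∧
      ∀ x, r ≤ ‖x‖ → 𝓕⁻ (fun f ↦ (h f : ℂ)) x = 0 := by
  obtain ⟨φ, hφ0, hφ⟩ := exists_schwartzMap_ne_zero_tsupport_subset_ball (V := V) (half_pos hr)
  have hmass := integral_norm_sq_fourier_pos hφ0
  have hmoment (k : ℕ) : Integrable fun f ↦ ‖f‖ ^ k * ‖𝓕 φ f‖ ^ 2 := by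
    simpa [← sq] using
      (SchwartzMap.pairing (ContinuousLinearMap.mul ℂ ℂ) (𝓕 φ) (𝓕 φ)).integrable_pow_mul volume k
  have hint : Integrable fun f ↦ ‖𝓕 φ f‖ ^ 2 := by simpa using hmoment 0
  obtain ⟨R, hR0, hR⟩ : ∃ R : ℝ, 0 < R ∧
      ∫ f, ‖f‖ ^ 2 * ‖𝓕 φ f‖ ^ 2 < R ^ 2 * ∫ f, ‖𝓕 φ f‖ ^ 2 :=
    ((Filter.eventually_gt_atTop 0).and
      (((Filter.tendsto_pow_atTop two_ne_zero).atTop_mul_const hmass).eventually_gt_atTop _)).exists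
  obtain ⟨ψ, hψ, hψφ⟩ := exists_fourier_eq_sq_sub_norm_sq_mul φ R
  have hweight (f : V) : (((R ^ 2 - ‖f‖ ^ 2) * ‖𝓕 φ f‖ ^ 2 : ℝ) : ℂ) = ⟪𝓕 φ f, 𝓕 ψ f⟫_ℂ := by
    rw [hψφ, ← smul_eq_mul (a := ((R ^ 2 - ‖f‖ ^ 2 : ℝ) : ℂ)), inner_smul_right,
      inner_self_eq_norm_sq_to_K]
    push_cast
    rfl
  refine ⟨fun f ↦ (R ^ 2 - ‖f‖ ^ 2) * ‖𝓕 φ f‖ ^ 2, ?_, ?_, ?_, ⟨R, fun f hf ↦ ?_⟩, fun x hx ↦ ?_⟩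
  · have := (𝓕 φ).continuous
    fun_prop
  · simp_rw [sub_mul]
    exact (hint.const_mul _).sub (hmoment 2)
  · simp_rw [sub_mul]
    rw [integral_sub (hint.const_mul _) (hmoment 2), integral_const_mul]
    exact sub_pos.mpr hR
  · rw [mem_closedBall_zero_iff, not_le] at hf
    exact mul_nonpos_of_nonpos_of_nonneg (by nlinarith) (by positivity)
  · simp_rw [hweight]
    exact fourierInv_inner_fourier_fourier_eq_zero hφ (hψ.trans hφ) hx

end BandLimited

section SpectralCovariance

variable {V κ α : Type*} [NormedAddCommGroup V] [InnerProductSpace ℝ V] [FiniteDimensional ℝ V]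
  [MeasurableSpace V] [BorelSpace V]

/-- The covariance matrix of a stationary multivariate field with matrix spectral density `H`,
sampled at `X a` in the component `cls a`. The covariance function is `𝓕⁻ H` entrywise, so
frequencies are measured in cycles: the paper's `Ĉ` corresponds to
`H f = (2π)^d • Ĉ (2π • f)`. -/
noncomputable def spectralCovarianceMatrix (H : V → Matrix κ κ ℂ) (cls : α → κ) (X : α → V) :
    Matrix α α ℂ :=
  of fun a b ↦ 𝓕⁻ (fun f ↦ H f (cls a) (cls b)) (X a - X b)

lemma spectralCovarianceMatrix_smul_one [DecidableEq κ] [DecidableEq α] {h : V → ℝ} {r : ℝ}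
    {cls : α → κ} {X : α → V} (hX : ∀ a b, a ≠ b → cls a = cls b → r ≤ ‖X a - X b‖)
    (hh : ∀ x, r ≤ ‖x‖ → 𝓕⁻ (fun f ↦ (h f : ℂ)) x = 0) :
    spectralCovarianceMatrix (fun f ↦ h f • (1 : Matrix κ κ ℂ)) cls X = (∫ f, h f) • 1 := by
  ext a b
  change 𝓕⁻ (fun f ↦ (h f • (1 : Matrix κ κ ℂ)) (cls a) (cls b)) (X a - X b) = _
  rcases eq_or_ne (cls a) (cls b) with hcls | hcls
  · have hentry (f : V) : (h f • (1 : Matrix κ κ ℂ)) (cls a) (cls b) = h f := by simp [hcls]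
    simp only [hentry]
    rcases eq_or_ne a b with rfl | hab
    · simp [Real.fourierInv_eq, integral_complex_ofReal]
    · simp [hh _ (hX a b hab hcls), hab]
  · have hab : a ≠ b := ne_of_apply_ne cls hcls
    simp [hcls, hab, Real.fourierInv_eq]

lemma integrable_fourierChar_inner_smul_iff {E : Type*} [NormedAddCommGroup E] [NormedSpace ℂ E]
    {g : V → E} (x : V) : Integrable (fun f ↦ 𝐞 ⟪f, x⟫_ℝ • g f) ↔ Integrable g := by
  simpa using Real.fourierIntegral_convergent_iff (μ := volume) (f := g) (-x)

variable [Finite α] {H H₁ H₂ : V → Matrix κ κ ℂ} (cls : α → κ) (X : α → V)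

lemma posSemidef_spectralCovarianceMatrix (hint : ∀ k l, Integrable fun f ↦ H f k l)
    (hH : ∀ f, (H f).PosSemidef) : (spectralCovarianceMatrix H cls X).PosSemidef := by
  let e (f : V) (a : α) : ℂ := 𝐞 ⟪f, X a⟫_ℝ
  have hphase (f : V) (a b : α) : (𝐞 ⟪f, X a - X b⟫_ℝ : ℂ) = e f a * star (e f b) := by
    rw [inner_sub_right, AddChar.map_sub_eq_div, Circle.coe_div, div_eq_mul_inv,
      ← Circle.coe_inv, Circle.coe_inv_eq_conj]
    rfl
  have hcov : spectralCovarianceMatrix H cls X =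
      of fun a b ↦ ∫ f, ((H f).submatrix cls cls ⊙ vecMulVec (e f) (star (e f))) a b := by
    ext a b
    simp only [spectralCovarianceMatrix, of_apply, Real.fourierInv_eq, Circle.smul_def, hphase,
      smul_eq_mul, hadamard_apply, submatrix_apply, vecMulVec_apply, Pi.star_apply, mul_comm]
  rw [hcov]
  refine posSemidef_integral (fun a b ↦ ?_) fun f ↦
    ((hH f).submatrix cls).hadamard (posSemidef_vecMulVec_self_star _)
  simpa only [hadamard_apply, submatrix_apply, vecMulVec_apply, Pi.star_apply, Circle.smul_def,
    hphase, smul_eq_mul, mul_comm] using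
    (integrable_fourierChar_inner_smul_iff (X a - X b)).mpr (hint (cls a) (cls b))

lemma spectralCovarianceMatrix_mono (hint₁ : ∀ k l, Integrable fun f ↦ H₁ f k l)
    (hint₂ : ∀ k l, Integrable fun f ↦ H₂ f k l) (hH : ∀ f, H₁ f ≤ H₂ f) :
    spectralCovarianceMatrix H₁ cls X ≤ spectralCovarianceMatrix H₂ cls X := by
  have hsub : spectralCovarianceMatrix H₂ cls X - spectralCovarianceMatrix H₁ cls X =
      spectralCovarianceMatrix (fun f ↦ H₂ f - H₁ f) cls X := by
    ext a b
    simp only [spectralCovarianceMatrix, Matrix.sub_apply, of_apply, Real.fourierInv_eq, smul_sub]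
    exact (integral_sub ((integrable_fourierChar_inner_smul_iff _).mpr (hint₂ _ _))
      ((integrable_fourierChar_inner_smul_iff _).mpr (hint₁ _ _))).symm
  rw [le_iff, hsub]
  exact posSemidef_spectralCovarianceMatrix cls X (fun k l ↦ (hint₂ k l).sub (hint₁ k l))
    fun f ↦ le_iff.mp (hH f)

end SpectralCovariance

theorem exists_pos_smul_one_le_spectralCovarianceMatrix_hadamard
    {V κ : Type*} [NormedAddCommGroup V] [InnerProductSpace ℝ V] [FiniteDimensional ℝ V]
    [MeasurableSpace V] [BorelSpace V] [Finite κ] {H : V → Matrix κ κ ℂ}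
    (hcont : Continuous H) (hint : ∀ k l, Integrable fun f ↦ H f k l)
    (hpos : ∀ f, (H f).PosDef) {r : ℝ} (hr : 0 < r) :
    ∃ ε : ℝ, 0 < ε ∧ ∀ {α : Type*} [Finite α] [DecidableEq α] (cls : α → κ) (X : α → V),
      (∀ a b, a ≠ b → cls a = cls b → r ≤ ‖X a - X b‖) →
      ∀ B : Matrix α α ℂ, B.PosSemidef → (∀ a, B a a = 1) →
        ε • 1 ≤ spectralCovarianceMatrix H cls X ⊙ B := by
  classical
  obtain ⟨h, hh_cont, hh_int, hh_mass, ⟨R, hhR⟩, hh_inv⟩ :=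
    exists_weight_fourierInv_eq_zero (V := V) hr
  obtain ⟨δ, hδ, hδH⟩ := exists_pos_forall_smul_one_le (isCompact_closedBall (0 : V) R) hcont hpos
    hh_cont.continuousOn hhR
  refine ⟨∫ f, δ * h f, by rw [integral_const_mul]; positivity, fun cls X hX B hB hB1 ↦ ?_⟩
  have hδh_inv (x : V) (hx : r ≤ ‖x‖) : 𝓕⁻ (fun f ↦ ((δ * h f : ℝ) : ℂ)) x = 0 := by
    simp only [Real.fourierInv_eq, ofReal_mul, Circle.smul_def, smul_eq_mul,
      mul_left_comm _ (δ : ℂ), integral_const_mul] at hh_inv ⊢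
    rw [hh_inv x hx, mul_zero]
  have hcov : (∫ f, δ * h f) • 1 ≤ spectralCovarianceMatrix H cls X := by
    rw [← spectralCovarianceMatrix_smul_one hX hδh_inv]
    refine spectralCovarianceMatrix_mono cls X (fun k l ↦ ?_) hint hδH
    exact (hh_int.const_mul δ).smul_const _
  have hdiag : B.diag = 1 := funext hB1
  simpa [hdiag] using smul_diagonal_diag_le_hadamard hcov hB

section FourierConvention

lemma integrable_and_integrable_fourier_of_fourierInv_fourier_eq {V E : Type*}
    [NormedAddCommGroup V] [InnerProductSpace ℝ V] [FiniteDimensional ℝ V] [MeasurableSpace V]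
    [BorelSpace V] [NormedAddCommGroup E] [NormedSpace ℂ E] {g : V → E} (hg : 𝓕⁻ (𝓕 g) = g) :
    Integrable g ∧ Integrable (𝓕 g) := by
  -- A transform of a non-integrable function is the junk value `0`, which forces `g = 0` by `hg`.
  have hfourier (h : ¬Integrable g) : 𝓕 g = 0 := funext fun f ↦
    integral_undef ((Real.fourierIntegral_convergent_iff f).not.mpr h)
  have hfourierInv (h : ¬Integrable (𝓕 g)) : 𝓕⁻ (𝓕 g) = 0 := by
    ext x
    rw [Real.fourierInv_eq]
    exact integral_undef ((integrable_fourierChar_inner_smul_iff x).not.mpr h)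
  have hzero : 𝓕 g = 0 ↔ g = 0 := by
    refine ⟨fun h ↦ ?_, fun h ↦ ?_⟩
    · rw [← hg, h]
      ext x
      simp [Real.fourierInv_eq]
    · rw [h]
      ext f
      simp [Real.fourier_eq]
  refine ⟨by_contra fun h ↦ h ?_, by_contra fun h ↦ h ?_⟩
  · rw [hzero.mp (hfourier h)]
    exact integrable_zero ..
  · rw [hzero.mpr (hg.symm.trans (hfourierInv h))]
    exact integrable_zero ..

variable {ι : Type*} [Fintype ι] {g : (ι → ℝ) → ℂ}

/-- The Fourier transform `(2π)⁻ᵈ ∫ g(x) e^{-i f·x} dx` in the convention of the paper: angular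
frequencies, with the whole normalising factor on the direct transform. -/
noncomputable def angularFourier (g : (ι → ℝ) → ℂ) (f : ι → ℝ) : ℂ :=
  ((2 * π : ℝ) ^ Fintype.card ι)⁻¹ • ∫ x : ι → ℝ, g x * cexp (-(I * (∑ t, f t * x t : ℝ)))

lemma fourier_comp_ofLp (g : (ι → ℝ) → ℂ) :
    𝓕 (fun x : EuclideanSpace ℝ ι ↦ g x.ofLp) =
      fun w ↦ (2 * π) ^ Fintype.card ι • angularFourier g ((2 * π) • w.ofLp) := by
  ext w
  rw [angularFourier, smul_inv_smul₀ (by positivity),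
    ← (PiLp.volume_preserving_ofLp ι).integral_comp
    (MeasurableEquiv.toLp 2 (ι → ℝ)).symm.measurableEmbedding, Real.fourier_eq']
  refine integral_congr_ae (.of_forall fun x ↦ ?_)
  simp only [PiLp.inner_apply, RCLike.inner_apply, conj_trivial, Pi.smul_apply, smul_eq_mul,
    mul_assoc, ← Finset.mul_sum]
  rw [mul_comm (g _)]
  congr 2
  push_cast
  ring

lemma fourierInv_comp_two_pi_smul_ofLp (g : (ι → ℝ) → ℂ) (x : EuclideanSpace ℝ ι) :
    𝓕⁻ (fun f : EuclideanSpace ℝ ι ↦ g ((2 * π) • f.ofLp)) x =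
      ((2 * π) ^ Fintype.card ι)⁻¹ • ∫ f, g f * cexp (I * (∑ t, f t * x t : ℝ)) := by
  have hscale := Measure.integral_comp_smul_of_nonneg volume
    (fun f : ι → ℝ ↦ g f * cexp (I * (∑ t, f t * x t : ℝ))) (2 * π) (hR := by positivity)
  rw [Module.finrank_fintype_fun_eq_card] at hscale
  rw [← hscale, ← (PiLp.volume_preserving_ofLp ι).integral_comp
    (MeasurableEquiv.toLp 2 (ι → ℝ)).symm.measurableEmbedding, Real.fourierInv_eq']
  refine integral_congr_ae (.of_forall fun f ↦ ?_)
  simp only [PiLp.inner_apply, RCLike.inner_apply, conj_trivial, Pi.smul_apply, smul_eq_mul,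
    mul_assoc, ← Finset.mul_sum, mul_comm (x.ofLp _)]
  rw [mul_comm (g _)]
  congr 2
  push_cast
  ring

lemma fourierInv_fourier_comp_ofLp
    (hg : ∀ x, g x = ∫ f, angularFourier g f * cexp (I * (∑ t, f t * x t : ℝ))) :
    𝓕⁻ (𝓕 fun x : EuclideanSpace ℝ ι ↦ g x.ofLp) = fun x ↦ g x.ofLp := by
  ext x
  rw [fourier_comp_ofLp, hg]
  refine (fourierInv_comp_two_pi_smul_ofLp ((2 * π) ^ Fintype.card ι • angularFourier g) x).trans ?_
  simp only [Pi.smul_apply, smul_mul_assoc, integral_smul]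
  exact inv_smul_smul₀ (by positivity) _

end FourierConvention

theorem smallest_eigenvalue_tapered_covariance_matrix_bounded_away_from_zero_general
    {ι κ : Type*} [Fintype ι] [Finite κ] {c : κ → κ → (ι → ℝ) → ℝ}
    (hinv : ∀ k l x, (c k l x : ℂ) =
      ∫ f, angularFourier (fun x ↦ (c k l x : ℂ)) f * cexp (I * (∑ t, f t * x t : ℝ)))
    (hpos : ∀ f, (of fun k l ↦ angularFourier (fun x ↦ (c k l x : ℂ)) f).PosDef)
    {Δ : ℝ} (hΔ : 0 < Δ) :
    ∃ ε : ℝ, 0 < ε ∧ ∀ {α : Type*} [Fintype α] (cls : α → κ) (X : α → ι → ℝ),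
      (∀ a b, a ≠ b → cls a = cls b → Δ ≤ ‖X a - X b‖) →
      ∀ B : Matrix α α ℝ, B.PosSemidef → (∀ a, B a a = 1) → ∀ v : α → ℝ,
        ε * ∑ a, v a ^ 2 ≤
          ∑ a, ∑ b, v a * (c (cls a) (cls b) (X a - X b) * B a b) * v b := by
  classical
  let C (k l : κ) (x : EuclideanSpace ℝ ι) : ℂ := c k l x.ofLp
  let H (w : EuclideanSpace ℝ ι) : Matrix κ κ ℂ := of fun k l ↦ 𝓕 (C k l) w
  have hC_inv (k l) : 𝓕⁻ (𝓕 (C k l)) = C k l := fourierInv_fourier_comp_ofLp (hinv k l)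
  have hC_int (k l) := integrable_and_integrable_fourier_of_fourierInv_fourier_eq (hC_inv k l)
  have hH_cont : Continuous H := continuous_matrix fun k l ↦
    VectorFourier.fourierIntegral_continuous Real.continuous_fourierChar
      continuous_inner (hC_int k l).1
  have hH_pos (w) : (H w).PosDef := by
    have hH : H w = (2 * π) ^ Fintype.card ι •
        of fun k l ↦ angularFourier (fun x ↦ (c k l x : ℂ)) ((2 * π) • w.ofLp) := by
      ext k l
      exact congrFun (fourier_comp_ofLp fun x ↦ (c k l x : ℂ)) w
    exact hH ▸ (hpos _).smul (by positivity)
  obtain ⟨ε, hε, hbound⟩ := exists_pos_smul_one_le_spectralCovarianceMatrix_hadamard hH_cont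
    (fun k l ↦ (hC_int k l).2) hH_pos hΔ
  refine ⟨ε, hε, fun cls X hX B hB hB1 v ↦ ?_⟩
  have hsep a b (hab : a ≠ b) (hcls : cls a = cls b) :
      Δ ≤ ‖WithLp.toLp 2 (X a) - WithLp.toLp 2 (X b)‖ :=
    (hX a b hab hcls).trans <| by
      simpa using (PiLp.lipschitzWith_ofLp 2 fun _ : ι ↦ ℝ).norm_sub_le
        (WithLp.toLp 2 (X a)) (WithLp.toLp 2 (X b))
  have hcov : spectralCovarianceMatrix H cls (fun a ↦ WithLp.toLp 2 (X a)) ⊙ B.map (↑) =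
      (of fun a b ↦ c (cls a) (cls b) (X a - X b) * B a b).map ((↑) : ℝ → ℂ) := by
    ext a b
    simp [spectralCovarianceMatrix, H, hC_inv, C]
  refine mul_sum_sq_le_of_smul_one_le_map_ofReal (𝕜 := ℂ) (hcov ▸ ?_) v
  exact hbound cls _ hsep _ (posSemidef_map_ofReal hB) (by simp [hB1])

/-- Under the hypotheses of the main theorem (polynomial decay, Fourier inversion, strictly
positive spectral density matrix, minimal distance between observation points of the same
component), for any family of real symmetric positive semidefinite taper matrices `A'` with
unit diagonal (one matrix for each choice of sample sizes `n₁, …, n_p`), the smallest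
eigenvalue of the tapered covariance matrices `Σ ∘ A'` (Schur product) is bounded away from
zero uniformly in `n₁, …, n_p`; the bound is expressed through the Rayleigh quotient. -/
theorem smallest_eigenvalue_tapered_covariance_matrix_bounded_away_from_zero
    (d p : ℕ) (hd : 1 ≤ d) (hp : 1 ≤ p)
    (c : Fin p → Fin p → (Fin d → ℝ) → ℝ)
    (A τ : ℝ) (hτ : 0 < τ)
    (hdecay : ∀ k l (x : Fin d → ℝ), |c k l x| ≤ A / (1 + ‖x‖ ^ ((d : ℝ) + τ)))
    (chat : Fin p → Fin p → (Fin d → ℝ) → ℂ)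
    (hchat : ∀ k l (f : Fin d → ℝ), chat k l f =
      ((2 * π : ℝ) ^ d : ℝ)⁻¹ •
        ∫ x : Fin d → ℝ, (c k l x : ℂ) *
          Complex.exp (-(Complex.I * ((∑ t, f t * x t : ℝ) : ℂ))))
    (hinv : ∀ k l (x : Fin d → ℝ), (c k l x : ℂ) =
      ∫ f : Fin d → ℝ, chat k l f *
        Complex.exp (Complex.I * ((∑ t, f t * x t : ℝ) : ℂ)))
    (hherm : ∀ f : Fin d → ℝ, (Matrix.of fun k l => chat k l f).IsHermitian)
    (hpos : ∀ (f : Fin d → ℝ) (i : Fin p), 0 < (hherm f).eigenvalues i)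
    (X : Fin p → ℕ → (Fin d → ℝ)) (Δ : ℝ) (hΔ : 0 < Δ)
    (hsep : ∀ (k : Fin p) (i j : ℕ), i ≠ j → Δ ≤ ‖X k i - X k j‖)
    (A' : (n : Fin p → ℕ) →
      Matrix ((k : Fin p) × Fin (n k)) ((k : Fin p) × Fin (n k)) ℝ)
    (hA'psd : ∀ n, (A' n).PosSemidef)
    (hA'diag : ∀ n a, A' n a a = 1) :
    ∃ ε > (0 : ℝ), ∀ n : Fin p → ℕ, (∀ k, 1 ≤ n k) →
      ∀ v : ((k : Fin p) × Fin (n k)) → ℝ,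
        ε * ∑ a, v a ^ 2 ≤
          ∑ a, ∑ b, v a * (c a.1 b.1 (X a.1 a.2 - X b.1 b.2) * A' n a b) * v b := by
  obtain rfl : chat = fun k l ↦ angularFourier fun x ↦ (c k l x : ℂ) := by
    ext k l f
    rw [hchat, angularFourier, Fintype.card_fin]
  obtain ⟨ε, hε, hbound⟩ :=
    smallest_eigenvalue_tapered_covariance_matrix_bounded_away_from_zero_general hinv
      (fun f ↦ (hherm f).posDef_iff_eigenvalues_pos.mpr (hpos f)) hΔ
  refine ⟨ε, hε, fun n _ ↦ hbound (α := (k : Fin p) × Fin (n k)) Sigma.fst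
    (fun a ↦ X a.1 a.2) ?_ (A' n) (hA'psd n) (hA'diag n)⟩
  rintro ⟨k, i⟩ ⟨l, j⟩ hij (rfl : k = l)
  exact hsep k i j fun h ↦ hij (Sigma.ext rfl (heq_of_eq (Fin.ext h)))
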